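/- Let p be a prime with p ≡ 3 (mod 4). Then Σ_{k=0}^{(p+1)/4} (−1)^k (8k−1) (−1/4)_k^3 / k!^3 ≡ (−1)^{(p+1)/4} · p (mod p^3). -/

import Mathlib

open Finset

/-- The Pochhammer symbol `(a)_k = a(a+1)⋯(a+k-1)` for rational `a`. -/
def poch (a : ℚ) (k : ℕ) : ℚ := ∏ j ∈ Finset.range k, (a + j)

lemma poch_succ (a : ℚ) (k : ℕ) : poch a (k+1) = poch a k * (a + k) := by
  simp [poch, prod_range_succ]

/-- shift relation -/
lemma poch_shift (a : ℚ) (k : ℕ) : poch a k * (a + k) = a * poch (a+1) k := by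
  induction k with
  | zero => simp [poch]
  | succ k ih =>
    rw [poch_succ, poch_succ, ih]; push_cast; ring

lemma poch_ne (a : ℚ) (h : ∀ m : ℤ, a + m ≠ 0) (k : ℕ) : poch a k ≠ 0 := by
  rw [poch, prod_ne_zero_iff]
  intro j _
  exact_mod_cast h j

/-- the WZ summand -/
def FF (a : ℚ) (n k : ℕ) : ℚ :=
  (-1)^(n+k) * (a + 2*k) * poch a k * poch (-n) k * poch (2*a+n) k /
    ((a+n) * k.factorial * poch (1+a+n) k * poch (1-a-n) k)

/-- the WZ mate -/
def GG (a : ℚ) (n k : ℕ) : ℚ :=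
  (-1)^(n+k) * (-(2*a+2*n+1)/(2*a+n)) * (k * (k-a-n)) * poch a k * poch (-n-1) k / (n+1) *
    poch (2*a+n) k /
    ((a+n) * k.factorial * poch (1+a+n) k * poch (1-a-n) k)

lemma wz_step (a : ℚ) (h1 : ∀ m : ℤ, a + m ≠ 0) (h2 : ∀ m : ℤ, 2 * a + m ≠ 0) (n k : ℕ) :
    FF a (n+1) k - FF a n k = GG a n (k+1) - GG a n k := by
  have e1 : (2*a+n) * poch (2*a+(n+1)) k = poch (2*a+n) k * (2*a+n+k) := by
    rw [poch_shift, add_assoc]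
  have e2 : poch (1+a+n) k * (1+a+n+k) = (1+a+n) * poch (1+a+(n+1)) k := by
    rw [poch_shift, add_assoc (1+a)]
  have e3 : poch (1-a-(n+1)) k * (k-a-n) = (-a-n) * poch (1-a-n) k := by
    have := poch_shift (1-a-(n+1)) k
    rw [show (1-a-(n+1)+1 : ℚ) = 1-a-n by ring] at this
    rw [← sub_eq_zero] at this ⊢
    rw [← this]; ring
  have e4 : (n+1) * poch (-n) k = poch (-n-1) k * (n+1-k) := by
    have := poch_shift (-n-1) k
    rw [show (-n-1+1 : ℚ) = -n by ring] at this
    linarith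
  have n1 : 2*a+n ≠ 0 := by exact_mod_cast h2 n
  have n2 : 1+a+n+k ≠ 0 := by have := h1 (1+n+k); push_cast at this; convert this using 1; ring
  have n3 : k-a-n ≠ 0 := by
    have := h1 (n-k); push_cast at this; intro h; apply this; linarith
  have n3' : k+1-a-n ≠ 0 := by
    have := h1 (n-k-1); push_cast at this; intro h; apply this; linarith
  have n4 : a+n ≠ 0 := by exact_mod_cast h1 n
  have n5 : 1+a+n ≠ 0 := by have := h1 (1+n); push_cast at this; convert this using 1; ring
  have n5' : a+(n+1) ≠ 0 := by have := h1 (1+n); push_cast at this; convert this using 1; ring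
  have n6 : (n:ℚ)+1 ≠ 0 := by positivity
  have n7 : (k:ℚ)+1 ≠ 0 := by positivity
  have n8 : (k.factorial:ℚ) ≠ 0 := by positivity
  have n9 : poch (1+a+n) k ≠ 0 := by
    apply poch_ne; intro m; have := h1 (1+n+m); push_cast at this; convert this using 1; ring
  have n10 : poch (1-a-n) k ≠ 0 := by
    apply poch_ne; intro m; have := h1 (n-m-1); push_cast at this; intro h; apply this; linarith
  have f1 : poch (2*a+(n+1)) k = poch (2*a+n) k * (2*a+n+k) / (2*a+n) := by
    rw [eq_div_iff n1, ← e1]; ring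
  have f2 : poch (1+a+(n+1)) k = poch (1+a+n) k * (1+a+n+k) / (1+a+n) := by
    rw [eq_div_iff n5, e2]; ring
  have f3 : poch (1-a-(n+1)) k = -(a+n) * poch (1-a-n) k / (k-a-n) := by
    rw [eq_div_iff n3, e3]; ring
  have f4 : poch (-n) k = poch (-n-1) k * (n+1-k) / (n+1) := by
    rw [eq_div_iff n6, ← e4]; ring
  have n1' : a*2+n ≠ 0 := by rw [mul_comm]; exact n1
  have n11 : (1 - a - n + k) ≠ 0 := by convert n3' using 1; ring
  unfold FF GG
  rw [Nat.factorial_succ]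
  simp only [poch_succ]
  push_cast
  rw [f1, f2, f3, f4, show (-((n:ℚ)+1)) = -n-1 by ring, show n+1+k = n+k+1 by ring,
    show n+(k+1) = n+k+1 by ring, pow_succ]
  generalize poch (-n-1) k = A at *
  generalize poch (1+a+n) k = B at *
  generalize poch (1-a-n) k = C at *
  generalize poch (2*a+n) k = D at *
  generalize poch a k = E at *
  generalize (k.factorial : ℚ) = H at *
  generalize (-1:ℚ)^(n+k) = s at *
  generalize (k:ℚ) = k at *
  generalize (n:ℚ) = n at *
  rw [show k+1-a-n = 1-a-n+k by ring]
  field_simp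
  ring

lemma poch_neg_zero (n k : ℕ) (h : n < k) : poch (-n) k = 0 := by
  rw [poch, prod_eq_zero_iff]
  exact ⟨n, by simpa using h, by simp⟩

lemma FF_sum (a : ℚ) (h1 : ∀ m : ℤ, a + m ≠ 0) (h2 : ∀ m : ℤ, 2 * a + m ≠ 0) (n : ℕ) :
    ∑ k ∈ range (n+1), FF a n k = 1 := by
  induction n with
  | zero =>
    have := h1 0
    simp at this
    simp [FF, poch, this]
  | succ n ih =>
    have h : ∑ k ∈ range (n+1+1), (FF a (n+1) k - FF a n k) = GG a n (n+1+1) - GG a n 0 := by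
      rw [← Finset.sum_range_sub]
      exact sum_congr rfl fun k _ => wz_step a h1 h2 n k
    have g0 : GG a n 0 = 0 := by simp [GG]
    have g1 : GG a n (n+1+1) = 0 := by
      have := poch_neg_zero (n+1) (n+1+1) (by omega)
      push_cast at this
      rw [neg_add, ← sub_eq_add_neg] at this
      simp [GG, this]
    have f0 : FF a n (n+1) = 0 := by
      simp [FF, poch_neg_zero n (n+1) (by omega)]
    rw [sum_sub_distrib, g0, g1, sum_range_succ (fun k => FF a n k), ih, f0] at h
    linarith

/-- The cleared-denominator sum. -/
def PP {R : Type*} [CommRing R] (n : ℕ) (a y : R) : R :=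
  ∑ k ∈ range (n+1), (-1)^k * (a + 2*k) * (∏ j ∈ range k, (a + j)) *
    (∏ j ∈ range k, ((a + j)^2 - y)) * (∏ j ∈ Ico k n, ((j:R)+1)) *
    (∏ j ∈ Ico k n, (((j:R)+1)^2 - y))

lemma PP_map {R S : Type*} [CommRing R] [CommRing S] (f : R →+* S) (n : ℕ) (a y : R) :
    f (PP n a y) = PP n (f a) (f y) := by
  have h2 : f 2 = 2 := map_ofNat f 2
  simp [PP, map_sum, map_prod, h2]

lemma refl_prod {R : Type*} [CommRing R] (g : R → R) (n k : ℕ) (h : k ≤ n) :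
    ∏ j ∈ range k, g ((n:R) - j) = ∏ j ∈ Ico (n-k) n, g ((j:R)+1) := by
  induction k with
  | zero => simp
  | succ k ih =>
    rw [prod_range_succ, ih (by omega), prod_eq_prod_Ico_succ_bot (show n-(k+1) < n by omega),
      show n-(k+1)+1 = n-k by omega, mul_comm]
    congr 2
    rw [Nat.cast_sub h]; push_cast; ring

lemma PP_neg {R : Type*} [CommRing R] [IsDomain R] [CharZero R] (n : ℕ) (y : R) :
    PP n (-(n:R)) y = 0 := by
  have key : PP n (-(n:R)) y = ∑ k ∈ range (n+1), (-(n:R) + 2*k) *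
      ((∏ j ∈ Ico (n-k) n, ((j:R)+1)) * (∏ j ∈ Ico (n-k) n, (((j:R)+1)^2 - y)) *
      ((∏ j ∈ Ico k n, ((j:R)+1)) * (∏ j ∈ Ico k n, (((j:R)+1)^2 - y)))) := by
    unfold PP
    apply sum_congr rfl
    intro k hk
    have hk : k ≤ n := by simpa [Nat.lt_succ_iff] using hk
    rw [← refl_prod (fun x => x) n k hk, ← refl_prod (fun x => x^2 - y) n k hk]
    have e1 : ∏ j ∈ range k, (-(n:R) + j) = (-1)^k * ∏ j ∈ range k, ((n:R) - j) := by
      rw [← card_range k, ← prod_const, card_range, ← prod_mul_distrib]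
      exact prod_congr rfl fun j _ => by ring
    have e2 : ∏ j ∈ range k, ((-(n:R) + j)^2 - y) = ∏ j ∈ range k, (((n:R) - j)^2 - y) :=
      prod_congr rfl fun j _ => by ring
    have e3 : ((-1:R)^k) * (-1)^k = 1 := by rw [← mul_pow]; simp
    rw [e1, e2]
    linear_combination (-(n:R) + 2*k) * (∏ j ∈ range k, ((n:R) - j)) *
      (∏ j ∈ range k, (((n:R) - j)^2 - y)) * (∏ j ∈ Ico k n, ((j:R)+1)) *
      (∏ j ∈ Ico k n, (((j:R)+1)^2 - y)) * e3
  have h2 : PP n (-(n:R)) y = - PP n (-(n:R)) y := by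
    conv_rhs => rw [key]
    conv_lhs => rw [key, ← sum_range_reflect]
    rw [← sum_neg_distrib]
    apply sum_congr rfl
    intro k hk
    have hk : k ≤ n := by simpa [Nat.lt_succ_iff] using hk
    rw [show n+1-1-k = n-k by omega, show n-(n-k) = k by omega, Nat.cast_sub hk]
    generalize (∏ j ∈ Ico k n, (((j:R)+1)^2 - y)) = A
    generalize (∏ j ∈ Ico (n-k) n, (((j:R)+1)^2 - y)) = B
    generalize (∏ j ∈ Ico k n, ((j:R)+1)) = C
    generalize (∏ j ∈ Ico (n-k) n, ((j:R)+1)) = D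
    ring
  exact self_eq_neg.mp h2

open Polynomial in
lemma PP_dvd {R : Type*} [CommRing R] [IsDomain R] [CharZero R] (n : ℕ) (a y : R) :
    (a + n) * y ∣ PP n a y - PP n a 0 := by
  have hroot : (PP n (X : R[X][X]) (C X)).IsRoot (-(n : R[X])) := by
    have := PP_map (evalRingHom (-(n : R[X]))) n (X : R[X][X]) (C X)
    simp only [coe_evalRingHom, eval_X, eval_C] at this
    rw [IsRoot, this, PP_neg]
  obtain ⟨g, hg⟩ := dvd_iff_isRoot.mpr hroot
  have ev : ∀ z : R, PP n a z = (a + n) * g.evalEval z a := by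
    intro z
    have h := congrArg (evalEvalRingHom z a) hg
    rw [PP_map] at h
    simpa [evalEval] using h
  rw [ev, ev, ← mul_sub]
  apply mul_dvd_mul_left
  have := sub_dvd_eval_sub y 0 (g.eval (C a))
  simpa [evalEval] using this

lemma fact_prod {R : Type*} [CommRing R] (n : ℕ) :
    ∏ j ∈ range n, ((j:R)+1) = n.factorial := by
  rw [← prod_range_add_one_eq_factorial]; push_cast; rfl

lemma PP_closed (a : ℚ) (h1 : ∀ m : ℤ, a + m ≠ 0) (h2 : ∀ m : ℤ, 2 * a + m ≠ 0) (n : ℕ) :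
    PP n a ((a+n)^2) = (n.factorial * ∏ j ∈ range n, (((j:ℚ)+1)^2 - (a+n)^2)) *
      ((-1)^n * (a+n)) := by
  have hs := FF_sum a h1 h2 n
  generalize hc : (n.factorial * ∏ j ∈ range n, (((j:ℚ)+1)^2 - (a+n)^2)) *
      ((-1)^n * (a+n)) = c
  rw [← mul_one c, ← hs, mul_sum, PP, ← hc]
  apply sum_congr rfl
  intro k hk
  have hk : k ≤ n := by simpa [Nat.lt_succ_iff] using hk
  have n4 : a+n ≠ 0 := by exact_mod_cast h1 n
  have n8 : (k.factorial:ℚ) ≠ 0 := by positivity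
  have n9 : poch (1+a+n) k ≠ 0 := by
    apply poch_ne; intro m; have := h1 (1+n+m); push_cast at this; convert this using 1; ring
  have n10 : poch (1-a-n) k ≠ 0 := by
    apply poch_ne; intro m; have := h1 (n-m-1); push_cast at this; intro h; apply this; linarith
  rw [← fact_prod n, ← prod_range_mul_prod_Ico _ hk, ← prod_range_mul_prod_Ico
    (fun j : ℕ => (((j:ℚ)+1)^2 - (a+n)^2)) hk, fact_prod k]
  have e1 : ∏ j ∈ range k, (((j:ℚ)+1)^2 - (a+n)^2) = poch (1+a+n) k * poch (1-a-n) k := by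
    rw [poch, poch, ← prod_mul_distrib]; exact prod_congr rfl fun j _ => by ring
  have e2 : ∏ j ∈ range k, ((a+j)^2 - (a+n)^2) = poch (-n) k * poch (2*a+n) k := by
    rw [poch, poch, ← prod_mul_distrib]; exact prod_congr rfl fun j _ => by ring
  have e3 : (-1:ℚ)^n * (-1)^n = 1 := by rw [← mul_pow]; simp
  rw [e1, e2, FF, pow_add, ← poch]
  field_simp
  rw [sq ((-1:ℚ)^n), e3]; ring

lemma PP_zero (a : ℚ) (n : ℕ) :
    PP n a 0 = (n.factorial:ℚ)^3 *
      ∑ k ∈ range (n+1), (-1)^k * (a + 2*k) * poch a k ^ 3 / (k.factorial:ℚ)^3 := by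
  rw [PP, mul_sum]
  apply sum_congr rfl
  intro k hk
  have hk : k ≤ n := by simpa [Nat.lt_succ_iff] using hk
  have n8 : (k.factorial:ℚ) ≠ 0 := by positivity
  rw [← fact_prod n, ← prod_range_mul_prod_Ico _ hk, fact_prod k]
  simp only [sub_zero, prod_pow]
  rw [← poch]
  field_simp

open Polynomial in
lemma prod_dvd' {R : Type*} [CommRing R] (n : ℕ) (y : R) :
    y ∣ (∏ j ∈ range n, (((j:R)+1)^2 - y)) - (n.factorial:R)^2 := by
  have := sub_dvd_eval_sub y 0 (∏ j ∈ range n, (((j:R[X])+1)^2 - X))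
  simpa [eval_prod, prod_pow, fact_prod] using this

theorem stmt15 (p : ℕ) [Fact p.Prime] (hp4 : p % 4 = 3) :
    ‖(((∑ k ∈ Finset.range ((p + 1) / 4 + 1),
          (-1 : ℚ) ^ k * (8 * (k : ℚ) - 1) * poch (-1/4) k ^ 3 /
            ((k.factorial : ℚ)) ^ 3) -
        ((-1 : ℚ) ^ ((p + 1) / 4) * p) : ℚ) : ℚ_[p])‖ ≤
      (p : ℝ) ^ (-3 : ℤ) := by
  have hp : p.Prime := Fact.out
  obtain ⟨n, hn⟩ : ∃ n, n = (p+1)/4 := ⟨_, rfl⟩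
  have hpn : p + 1 = 4 * n := by omega
  rw [← hn]
  have hpq : (p:ℚ) + 1 = 4 * n := by exact_mod_cast hpn
  set S := ∑ k ∈ Finset.range (n + 1),
          (-1 : ℚ) ^ k * (8 * (k : ℚ) - 1) * poch (-1/4) k ^ 3 /
            ((k.factorial : ℚ)) ^ 3 with hS
  have hS4 : 4 * PP n (-1/4 : ℚ) 0 = (n.factorial:ℚ)^3 * S := by
    rw [PP_zero, hS, mul_left_comm, mul_sum]
    congr 1
    exact sum_congr rfl fun k _ => by ring
  have hcl := PP_closed (-1/4)
    (by
      intro m h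
      have : (4*m:ℚ) = 1 := by linarith
      have : 4*m = 1 := by exact_mod_cast this
      omega)
    (by
      intro m h
      have : (2*m:ℚ) = 1 := by linarith
      have : 2*m = 1 := by exact_mod_cast this
      omega) n
  rw [show (-1/4 + n : ℚ) = p/4 by linarith] at hcl
  -- unit 4
  have hpodd : ¬ p ∣ 4 := by
    intro h
    have := Nat.le_of_dvd (by norm_num) h
    interval_cases p <;> omega
  have hfac : ¬ p ∣ n.factorial := by
    rw [hp.dvd_factorial]; have := hp.pos; omega
  have hunit : ∀ m : ℕ, ¬ p ∣ m → ‖(m : ℚ_[p])‖ = 1 := by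
    intro m hm
    refine le_antisymm (by exact_mod_cast Padic.norm_int_le_one (p := p) m) ?_
    by_contra h
    push Not at h
    exact hm (Padic.norm_natCast_lt_one_iff.mp h)
  have h4Z : IsUnit ((4:ℕ) : ℤ_[p]) := by
    rw [PadicInt.isUnit_iff]
    have := hunit 4 hpodd
    rw [← this]; rfl
  obtain ⟨u, hu⟩ := h4Z.exists_right_inv
  push_cast at hu
  have hu' : (u : ℚ_[p]) = 1/4 := by
    have h : ((4 * u : ℤ_[p]) : ℚ_[p]) = 1 := by rw [hu]; rfl
    rw [PadicInt.coe_mul] at h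
    have h4 : ((4 : ℤ_[p]) : ℚ_[p]) = 4 := rfl
    rw [h4] at h
    field_simp
    linear_combination h
  have hpZ : (p:ℤ_[p]) + 1 = 4 * n := by exact_mod_cast hpn
  have han : -u + n = (p:ℤ_[p]) * u := by linear_combination (-u) * hpZ - (n:ℤ_[p]) * hu
  obtain ⟨r, hr⟩ := PP_dvd n (-u) (((p:ℤ_[p]) * u)^2)
  obtain ⟨t, ht⟩ := prod_dvd' n (((p:ℤ_[p]) * u)^2)
  rw [han] at hr
  -- transfer to Q_p
  have hr' := congrArg (PadicInt.Coe.ringHom (p := p)) hr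
  have ht' := congrArg (PadicInt.Coe.ringHom (p := p)) ht
  have cu : PadicInt.Coe.ringHom u = (1/4 : ℚ_[p]) := hu'
  simp only [map_sub, PP_map, map_mul, map_pow, map_neg, map_prod, map_add, map_one, map_natCast,
    map_zero, cu] at hr' ht'
  have q1 := congrArg (Rat.castHom ℚ_[p]) hcl
  have q2 := congrArg (Rat.castHom ℚ_[p]) hS4
  simp only [map_sub, PP_map, map_mul, map_pow, map_neg, map_prod, map_add, map_one, map_natCast,
    map_zero, map_div₀, map_ofNat] at q1 q2
  have qS : (Rat.castHom ℚ_[p]) S = (S : ℚ_[p]) := rfl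
  rw [qS] at q2
  rw [show ((p:ℚ_[p]) * (1/4)) = p/4 by ring] at hr' ht'
  rw [show (-(1/4) : ℚ_[p]) = -1/4 by ring] at hr'
  set r' := PadicInt.Coe.ringHom r with hrr
  set t' := PadicInt.Coe.ringHom t with htt
  have main : (n.factorial:ℚ_[p])^3 * 16 * ((S - (-1)^n * p : ℚ) : ℚ_[p]) =
      (p:ℚ_[p])^3 * ((n.factorial:ℚ_[p]) * (-1)^n * t' - r') := by
    push_cast
    rw [q1] at hr'
    linear_combination (-16) * q2 - 64 * hr' + 16 * (n.factorial:ℚ_[p]) * (-1)^n * p * ht'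
  have nm := congrArg norm main
  have b : ‖(n.factorial:ℚ_[p]) * (-1)^n * t' - r'‖ ≤ 1 := by
    have : (n.factorial:ℚ_[p]) * (-1)^n * t' - r' =
        (((n.factorial:ℤ_[p]) * (-1)^n * t - r : ℤ_[p]) : ℚ_[p]) := by
      have hr2 : r' = (r:ℚ_[p]) := rfl
      have ht2 : t' = (t:ℚ_[p]) := rfl
      rw [hr2, ht2]
      push_cast
      rfl
    rw [this]; exact PadicInt.norm_le_one _
  have h16 : ‖(16 : ℚ_[p])‖ = 1 := by
    have := hunit 4 hpodd
    rw [show (16:ℚ_[p]) = ((4:ℕ):ℚ_[p])^2 by norm_num, norm_pow, this, one_pow]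
  rw [norm_mul, norm_mul, norm_pow, hunit _ hfac, h16, norm_mul, norm_pow, Padic.norm_p] at nm
  rw [one_pow, one_mul, one_mul] at nm
  rw [nm]
  calc _ ≤ ((p:ℝ)⁻¹)^3 * 1 := by gcongr
    _ = _ := by rw [mul_one, zpow_neg, inv_pow]; norm_cast
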